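/- Let rk be a rank function satisfying (A1)–(A4) and the 3D line–plane intersection axiom (A10). If A, B, C and A', B', C' are points with rk{A,B,C} = 3 and rk{A',B',C'} = 3, then there exist two points M and N with rk{M,N} = 2 (so M ≠ N) such that rk{A,B,C,M} = 3, rk{A',B',C',M} = 3, rk{A,B,C,N} = 3 and rk{A',B',C',N} = 3; that is, the intersection of the two planes contains at least two distinct points. -/

import Mathlib

/-!
Call a finite set `I` with `rk I = |I|` a simplex. A point in the span of a simplex that lies on
all of its faces `I.erase a` would lie in the span of the empty set, since spans of subsets of an
independent set commute with intersections. For the triangle `A'B'C'`, let `M` be a point where one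
side meets the plane `ABC`. Some side misses `M`, and the point `N` where that side meets `ABC` is
therefore different from `M`.
-/

open Finset

/-- Rank functions of (finitary) matroids, given on the finite subsets of the ground type: axioms
(A1)–(A3). Axiom (A4), which excludes loops, is assumed separately where it matters. -/
structure IsRankFunction {α : Type*} [DecidableEq α] (rk : Finset α → ℕ) : Prop where
  le_card (X : Finset α) : rk X ≤ #X
  mono : Monotone rk
  submodular (X Y : Finset α) : rk (X ∪ Y) + rk (X ∩ Y) ≤ rk X + rk Y

/-- The closure (span) of a finite set for a rank function: the points that can be added to it
without raising the rank. -/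
def rankClosure {α : Type*} [DecidableEq α] (rk : Finset α → ℕ) (X : Finset α) : Set α :=
  {m | rk (insert m X) = rk X}

theorem mem_rankClosure_iff {α : Type*} [DecidableEq α] {rk : Finset α → ℕ} {X : Finset α} {m : α} :
    m ∈ rankClosure rk X ↔ rk (insert m X) = rk X :=
  Iff.rfl

namespace IsRankFunction

variable {α : Type*} [DecidableEq α] {rk : Finset α → ℕ} {I X Y : Finset α} {m n : α}

theorem rk_empty (h : IsRankFunction rk) : rk ∅ = 0 :=
  Nat.le_zero.mp (h.le_card ∅)

theorem rk_eq_card_of_subset (h : IsRankFunction rk) (hI : rk I = #I) (hXI : X ⊆ I) :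
    rk X = #X := by
  have hsub : rk I + rk ∅ ≤ rk X + rk (I \ X) := by
    simpa only [union_sdiff_of_subset hXI, inter_sdiff_self] using h.submodular X (I \ X)
  have hcard : #(I \ X) + #X = #I := card_sdiff_add_card_eq_card hXI
  have hX := h.le_card X
  have hIX := h.le_card (I \ X)
  omega

theorem rankClosure_mono (h : IsRankFunction rk) (hXY : X ⊆ Y) :
    rankClosure rk X ⊆ rankClosure rk Y := by
  intro m hm
  rw [mem_rankClosure_iff] at hm ⊢
  have hunion : insert m X ∪ Y = insert m Y := by rw [insert_union, union_eq_right.mpr hXY]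
  have hsub := h.submodular (insert m X) Y
  have hinter : rk X ≤ rk (insert m X ∩ Y) :=
    h.mono (subset_inter (subset_insert m X) hXY)
  rw [hunion] at hsub
  exact le_antisymm (by omega) (h.mono (subset_insert m Y))

theorem mem_rankClosure_inter_of_modular (h : IsRankFunction rk)
    (hmod : rk X + rk Y = rk (X ∪ Y) + rk (X ∩ Y))
    (hX : m ∈ rankClosure rk X) (hY : m ∈ rankClosure rk Y) :
    m ∈ rankClosure rk (X ∩ Y) := by
  rw [mem_rankClosure_iff] at hX hY ⊢
  have hsub := h.submodular (insert m X) (insert m Y)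
  rw [← insert_union_distrib, ← insert_inter_distrib, hX, hY] at hsub
  have hunion : rk (X ∪ Y) ≤ rk (insert m (X ∪ Y)) := h.mono (subset_insert m _)
  exact le_antisymm (by omega) (h.mono (subset_insert m _))

theorem mem_rankClosure_inter_of_subset (h : IsRankFunction rk) (hI : rk I = #I)
    (hXI : X ⊆ I) (hYI : Y ⊆ I) (hX : m ∈ rankClosure rk X) (hY : m ∈ rankClosure rk Y) :
    m ∈ rankClosure rk (X ∩ Y) := by
  refine h.mem_rankClosure_inter_of_modular ?_ hX hY
  rw [h.rk_eq_card_of_subset hI hXI, h.rk_eq_card_of_subset hI hYI,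
    h.rk_eq_card_of_subset hI (union_subset hXI hYI),
    h.rk_eq_card_of_subset hI (inter_subset_left.trans hXI), card_union_add_card_inter]

theorem exists_notMem_rankClosure_erase (h : IsRankFunction rk) (hI : rk I = #I)
    (hmI : m ∈ rankClosure rk I) (hm : m ∉ rankClosure rk ∅) :
    ∃ a ∈ I, m ∉ rankClosure rk (I.erase a) := by
  by_contra! hfaces
  have hsdiff (J : Finset α) (hJI : J ⊆ I) : m ∈ rankClosure rk (I \ J) := by
    induction J using Finset.induction_on with
    | empty => rwa [sdiff_empty]
    | insert a J _ ih =>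
      obtain ⟨haI, hJI⟩ := insert_subset_iff.mp hJI
      have hinter : I \ insert a J = (I \ J) ∩ I.erase a := by
        ext x
        simp only [mem_sdiff, mem_insert, mem_inter, mem_erase]
        tauto
      rw [hinter]
      exact h.mem_rankClosure_inter_of_subset hI sdiff_subset (erase_subset a I) (ih hJI)
        (hfaces a haI)
  exact hm (by simpa only [Finset.sdiff_self] using hsdiff I Subset.rfl)

theorem notMem_rankClosure_empty (h : IsRankFunction rk) (hm : rk {m} = 1) :
    m ∉ rankClosure rk ∅ := by
  rw [mem_rankClosure_iff, insert_empty_eq, hm, h.rk_empty]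
  exact one_ne_zero

theorem rk_pair_eq_two (h : IsRankFunction rk) (hn : rk {n} = 1)
    (hmX : m ∉ rankClosure rk X) (hnX : n ∈ rankClosure rk X) : rk {m, n} = 2 := by
  rw [mem_rankClosure_iff] at hmX hnX
  have hlt : rk X < rk (insert m X) := (h.mono (subset_insert m X)).lt_of_ne' hmX
  have hsub := h.submodular {m, n} (insert n X)
  have hunion : rk (insert m X) ≤ rk ({m, n} ∪ insert n X) := h.mono (by grind)
  have hinter : rk {n} ≤ rk ({m, n} ∩ insert n X) := h.mono (by grind)
  have hpair : rk {m, n} ≤ 2 := (h.le_card _).trans card_le_two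
  omega

theorem exists_rk_pair_eq_two_of_meets_faces (h : IsRankFunction rk) (hI : rk I = #I)
    (hne : I.Nonempty) {S : Set α} (hS : ∀ m ∈ S, rk {m} = 1)
    (hmeets : ∀ a ∈ I, ∃ m ∈ S, m ∈ rankClosure rk (I.erase a)) :
    ∃ m ∈ S ∩ rankClosure rk I, ∃ n ∈ S ∩ rankClosure rk I, rk {m, n} = 2 := by
  have hface (a : α) : rankClosure rk (I.erase a) ⊆ rankClosure rk I :=
    h.rankClosure_mono (erase_subset a I)
  obtain ⟨b, hb⟩ := hne
  obtain ⟨m, hmS, hmb⟩ := hmeets b hb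
  obtain ⟨a, ha, hma⟩ := h.exists_notMem_rankClosure_erase hI (hface b hmb)
    (h.notMem_rankClosure_empty (hS m hmS))
  obtain ⟨n, hnS, hna⟩ := hmeets a ha
  exact ⟨m, ⟨hmS, hface b hmb⟩, n, ⟨hnS, hface a hna⟩, h.rk_pair_eq_two (hS n hnS) hma hna⟩

theorem meets_faces_of_meets_lines (h : IsRankFunction rk) (hI : rk I = #I) (hcard : #I = 3)
    {S : Set α} (hlines : ∀ x y, rk {x, y} = 2 → ∃ m ∈ S, m ∈ rankClosure rk {x, y}) :
    ∀ a ∈ I, ∃ m ∈ S, m ∈ rankClosure rk (I.erase a) := by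
  intro a ha
  have hside : #(I.erase a) = 2 := by rw [card_erase_of_mem ha, hcard]
  have hrk : rk (I.erase a) = 2 := (h.rk_eq_card_of_subset hI (erase_subset a I)).trans hside
  obtain ⟨x, y, -, hxy⟩ := card_eq_two.mp hside
  rw [hxy] at hrk ⊢
  exact hlines x y hrk

end IsRankFunction

theorem mem_rankClosure_triple_iff {α : Type*} [DecidableEq α] {rk : Finset α → ℕ} {a b c m : α}
    (habc : rk {a, b, c} = 3) : m ∈ rankClosure rk {a, b, c} ↔ rk {a, b, c, m} = 3 := by
  have hperm : insert m {a, b, c} = ({a, b, c, m} : Finset α) := by grind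
  rw [mem_rankClosure_iff, hperm, habc]

theorem mem_rankClosure_pair_iff {α : Type*} [DecidableEq α] {rk : Finset α → ℕ} {a b m : α}
    (hab : rk {a, b} = 2) : m ∈ rankClosure rk {a, b} ↔ rk {a, b, m} = 2 := by
  have hperm : insert m {a, b} = ({a, b, m} : Finset α) := by grind
  rw [mem_rankClosure_iff, hperm, hab]

/-- With rank axioms (A1)–(A4) and the 3D line–plane intersection
axiom (A10), the intersection of two planes contains at least two distinct
points. -/
theorem stmt_5 {P : Type*} [DecidableEq P] (rk : Finset P → ℕ)
    (hA1 : ∀ X : Finset P, rk X ≤ X.card)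
    (hA2 : ∀ X Y : Finset P, X ⊆ Y → rk X ≤ rk Y)
    (hA3 : ∀ X Y : Finset P, rk (X ∪ Y) + rk (X ∩ Y) ≤ rk X + rk Y)
    (hA4 : ∀ p : P, rk {p} = 1)
    (hA10 : ∀ A B C A' B' : P, rk {A, B, C} = 3 → rk {A', B'} = 2 →
      ∃ M : P, rk {A, B, C, M} = 3 ∧ rk {A', B', M} = 2)
    (A B C A' B' C' : P)
    (hABC : rk {A, B, C} = 3)
    (hA'B'C' : rk {A', B', C'} = 3) :
    ∃ M N : P, rk {M, N} = 2 ∧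
      rk {A, B, C, M} = 3 ∧ rk {A', B', C', M} = 3 ∧
      rk {A, B, C, N} = 3 ∧ rk {A', B', C', N} = 3 := by
  have h : IsRankFunction rk := ⟨hA1, fun X Y => hA2 X Y, hA3⟩
  have hcard : #{A', B', C'} = 3 := le_antisymm card_le_three (hA'B'C' ▸ hA1 _)
  have hindep : rk {A', B', C'} = #{A', B', C'} := hA'B'C'.trans hcard.symm
  have hlines : ∀ x y, rk {x, y} = 2 →
      ∃ M ∈ rankClosure rk {A, B, C}, M ∈ rankClosure rk {x, y} := by
    intro x y hxy
    simpa only [mem_rankClosure_triple_iff hABC, mem_rankClosure_pair_iff hxy]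
      using hA10 A B C x y hABC hxy
  obtain ⟨M, ⟨hM, hM'⟩, N, ⟨hN, hN'⟩, hMN⟩ :=
    h.exists_rk_pair_eq_two_of_meets_faces hindep (insert_nonempty A' _) (fun p _ => hA4 p)
      (h.meets_faces_of_meets_lines hindep hcard hlines)
  rw [mem_rankClosure_triple_iff hABC] at hM hN
  rw [mem_rankClosure_triple_iff hA'B'C'] at hM' hN'
  exact ⟨M, N, hMN, hM, hM', hN, hN'⟩
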